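/- arXiv:1903.03812 — 5 statements merged into one kernel-verified Lean document; each statement's English description precedes it below -/
import Mathlib

section
/- For every real w with 0 < w ≤ w*, the operator H_w is a max-norm contraction with contraction factor (w·α + 1 − w): for all P, Q : S×A → ℝ, ‖H_w P − H_w Q‖ ≤ (w·α + 1 − w)·‖P − Q‖. -/
open Finset

/-- Maximum of a real-valued function over a nonempty finite type. -/
noncomputable def fmax {A : Type*} [Fintype A] [Nonempty A] (f : A → ℝ) : ℝ :=
  Finset.univ.sup' Finset.univ_nonempty f

/-- Sup (maximum-absolute-value) norm of a real-valued function on a nonempty finite type. -/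
noncomputable def supNorm {I : Type*} [Fintype I] [Nonempty I] (f : I → ℝ) : ℝ :=
  fmax (fun i => |f i|)

/-- The over-relaxation bound `w* = min_{(i,a)} 1/(1 - α p(i|i,a))`. -/
noncomputable def wstar {S A : Type*} [Fintype S] [Fintype A] [Nonempty S] [Nonempty A]
    (p : S → A → S → ℝ) (α : ℝ) : ℝ :=
  Finset.univ.inf' Finset.univ_nonempty (fun ia : S × A => 1 / (1 - α * p ia.1 ia.2 ia.1))

/-- The SOR Q-Bellman operator `H_w`. -/
noncomputable def Hw {S A : Type*} [Fintype S] [Fintype A] [Nonempty S] [Nonempty A]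
    (p : S → A → S → ℝ) (r : S → A → ℝ) (α w : ℝ) (Q : S → A → ℝ) : S → A → ℝ :=
  fun i a => w * (r i a + α * ∑ j, p i a j * fmax (Q j)) + (1 - w) * fmax (Q i)

/- The rewards cancel in `H_w P - H_w Q`, whose `(i, a)` entry is a linear combination of the
differences `max P(j, ·) - max Q(j, ·)`. The bound `w ≤ w*` says exactly that the coefficient of the
`j = i` term is nonnegative; the others are nonnegative anyway, and the coefficients sum to
`w α + 1 - w`. -/

section FiniteMax

variable {I : Type*} [Fintype I] [Nonempty I] {f g : I → ℝ} {C : ℝ}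

theorem le_fmax (f : I → ℝ) (i : I) : f i ≤ fmax f :=
  le_sup' f (mem_univ i)

theorem fmax_le (h : ∀ i, f i ≤ C) : fmax f ≤ C :=
  sup'_le _ _ fun i _ => h i

theorem fmax_le_fmax_add (h : ∀ i, f i ≤ g i + C) : fmax f ≤ fmax g + C :=
  fmax_le fun i => (h i).trans (add_le_add_left (le_fmax g i) C)

theorem abs_fmax_sub_fmax_le (h : ∀ i, |f i - g i| ≤ C) : |fmax f - fmax g| ≤ C := by
  have hfg : fmax f ≤ fmax g + C :=
    fmax_le_fmax_add fun i => by linarith [(abs_sub_le_iff.1 (h i)).1]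
  have hgf : fmax g ≤ fmax f + C :=
    fmax_le_fmax_add fun i => by linarith [(abs_sub_le_iff.1 (h i)).2]
  exact abs_sub_le_iff.2 ⟨sub_le_iff_le_add'.2 hfg, sub_le_iff_le_add'.2 hgf⟩

theorem abs_le_supNorm (f : I → ℝ) (i : I) : |f i| ≤ supNorm f :=
  le_fmax (fun i => |f i|) i

theorem supNorm_le (h : ∀ i, |f i| ≤ C) : supNorm f ≤ C :=
  fmax_le h

theorem supNorm_nonneg (f : I → ℝ) : 0 ≤ supNorm f :=
  (abs_nonneg _).trans (abs_le_supNorm f (Classical.arbitrary I))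

end FiniteMax

theorem abs_sum_mul_le_sum_mul {ι R : Type*} [Ring R] [LinearOrder R] [IsOrderedRing R]
    {s : Finset ι} {c d : ι → R} {C : R}
    (hc : ∀ j ∈ s, 0 ≤ c j) (hd : ∀ j ∈ s, |d j| ≤ C) :
    |∑ j ∈ s, c j * d j| ≤ (∑ j ∈ s, c j) * C :=
  calc |∑ j ∈ s, c j * d j|
      ≤ ∑ j ∈ s, |c j * d j| := abs_sum_le_sum_abs _ _
    _ ≤ ∑ j ∈ s, c j * C := sum_le_sum fun j hj => by
        rw [abs_mul, abs_of_nonneg (hc j hj)]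
        exact mul_le_mul_of_nonneg_left (hd j hj) (hc j hj)
    _ = (∑ j ∈ s, c j) * C := (sum_mul _ _ _).symm

section SORWeight

variable {S : Type*} [DecidableEq S] {q : S → ℝ} {α w : ℝ} {i : S}

/-- The coefficient of the state value at `j` in the `w`-relaxed Bellman update at state `i`, where
`q` is the row of transition probabilities out of `i` under the chosen action. -/
def sorWeight (q : S → ℝ) (α w : ℝ) (i j : S) : ℝ :=
  w * α * q j + if j = i then 1 - w else 0

theorem sorWeight_nonneg (hq : ∀ j, 0 ≤ q j) (hwα : 0 ≤ w * α) (hw : w * (1 - α * q i) ≤ 1)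
    (j : S) : 0 ≤ sorWeight q α w i j := by
  rcases eq_or_ne j i with rfl | hji
  · simp only [sorWeight, if_true]
    linarith
  · simpa only [sorWeight, if_neg hji, add_zero] using mul_nonneg hwα (hq j)

theorem sum_sorWeight_mul [Fintype S] (q : S → ℝ) (α w : ℝ) (i : S) (v : S → ℝ) :
    ∑ j, sorWeight q α w i j * v j = w * α * ∑ j, q j * v j + (1 - w) * v i := by
  simp only [sorWeight, add_mul, sum_add_distrib, ite_mul, zero_mul, sum_ite_eq', mem_univ,
    if_true, mul_assoc, mul_sum]

theorem sum_sorWeight_le [Fintype S] (hq : ∑ j, q j ≤ 1) (hwα : 0 ≤ w * α) :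
    ∑ j, sorWeight q α w i j ≤ w * α + 1 - w := by
  have hsum : ∑ j, sorWeight q α w i j = w * α * ∑ j, q j + (1 - w) := by
    simpa only [mul_one] using sum_sorWeight_mul q α w i fun _ => 1
  linarith [mul_le_of_le_one_right hwα hq]

end SORWeight

section SOROperator

variable {S A : Type*} [Fintype S] [Fintype A] [Nonempty S] [Nonempty A]
  {p : S → A → S → ℝ} {α w : ℝ}

theorem Hw_sub_Hw [DecidableEq S] (p : S → A → S → ℝ) (r : S → A → ℝ) (α w : ℝ)
    (P Q : S → A → ℝ) (i : S) (a : A) :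
    Hw p r α w P i a - Hw p r α w Q i a =
      ∑ j, sorWeight (p i a) α w i j * (fmax (P j) - fmax (Q j)) := by
  simp only [mul_sub, sum_sub_distrib, sum_sorWeight_mul, Hw]
  ring

theorem mul_one_sub_le_one_of_le_wstar (hw0 : 0 ≤ w) (hw : w ≤ wstar p α) (i : S) (a : A) :
    w * (1 - α * p i a i) ≤ 1 := by
  have hw_le : w ≤ 1 / (1 - α * p i a i) :=
    hw.trans (inf'_le (fun ia : S × A => 1 / (1 - α * p ia.1 ia.2 ia.1)) (mem_univ (i, a)))
  have hden : 0 ≤ 1 - α * p i a i := one_div_nonneg.1 (hw0.trans hw_le)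
  exact mul_le_of_le_div₀ zero_le_one hden hw_le

theorem Hw_contraction_general (r : S → A → ℝ) (hp : ∀ i a j, 0 ≤ p i a j)
    (hsum : ∀ i a, ∑ j, p i a j ≤ 1) (hwα : 0 ≤ w * α)
    (hw : ∀ i a, w * (1 - α * p i a i) ≤ 1) (P Q : S → A → ℝ) :
    supNorm (fun ia : S × A => Hw p r α w P ia.1 ia.2 - Hw p r α w Q ia.1 ia.2) ≤
      (w * α + 1 - w) * supNorm (fun ia : S × A => P ia.1 ia.2 - Q ia.1 ia.2) := by
  classical
  set N := supNorm (fun ia : S × A => P ia.1 ia.2 - Q ia.1 ia.2)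
  have hvalue (j : S) : |fmax (P j) - fmax (Q j)| ≤ N :=
    abs_fmax_sub_fmax_le fun b =>
      abs_le_supNorm (fun ia : S × A => P ia.1 ia.2 - Q ia.1 ia.2) (j, b)
  refine supNorm_le fun ⟨i, a⟩ => ?_
  calc |Hw p r α w P i a - Hw p r α w Q i a|
      = |∑ j, sorWeight (p i a) α w i j * (fmax (P j) - fmax (Q j))| := by rw [Hw_sub_Hw]
    _ ≤ (∑ j, sorWeight (p i a) α w i j) * N :=
        abs_sum_mul_le_sum_mul (fun j _ => sorWeight_nonneg (hp i a) hwα (hw i a) j)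
          fun j _ => hvalue j
    _ ≤ (w * α + 1 - w) * N :=
        mul_le_mul_of_nonneg_right (sum_sorWeight_le (hsum i a) hwα) (supNorm_nonneg _)

end SOROperator

/-- For `0 < w ≤ w*`, the SOR Q-Bellman operator `H_w` is a max-norm contraction with
contraction factor `w·α + 1 - w`. -/
theorem Hw_contraction {S A : Type*} [Fintype S] [Fintype A] [Nonempty S] [Nonempty A]
    (p : S → A → S → ℝ) (r : S → A → ℝ) (α : ℝ)
    (hp : ∀ i a j, 0 ≤ p i a j) (hsum : ∀ i a, ∑ j, p i a j = 1)
    (hα0 : 0 ≤ α) (hα1 : α < 1)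
    (w : ℝ) (hw0 : 0 < w) (hw : w ≤ wstar p α) :
    ∀ P Q : S → A → ℝ,
      supNorm (fun ia : S × A => Hw p r α w P ia.1 ia.2 - Hw p r α w Q ia.1 ia.2) ≤
        (w * α + 1 - w) * supNorm (fun ia : S × A => P ia.1 ia.2 - Q ia.1 ia.2) := by
  exact Hw_contraction_general r hp (fun i a => (hsum i a).le) (mul_nonneg hw0.le hα0)
    (mul_one_sub_le_one_of_le_wstar hw0.le hw)
end

section
/- For every real w with 0 < w ≤ w*, the operator H_w has exactly one fixed point: there exists a unique Q* : S×A → ℝ with H_w Q* = Q*. -/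
open Finset

/-!
`H_w` factors through the greedy values `V i = max_a Q i a`, as `H_w = f ∘ g` with `g Q = V`, and
fixed points of `f ∘ g` correspond to those of `g ∘ f`. A constant passes through a maximum, so for
`w ≠ 0` the equation `g (f V) = V` loses its relaxation term `(1 - w) V` and becomes
`V i = w⁻¹ max_a (w (r i a + α ∑ j, p i a j V j))`. Its right-hand side has Lipschitz constant
`max_(i,a) ∑ j, |α p i a j|` in the sup norm, whatever `w` is, so Banach's theorem applies.
-/

open Function NNReal

theorem existsUnique_isFixedPt_comp_comm {X Y : Type*} {f : Y → X} {g : X → Y}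
    (h : ∃! y, IsFixedPt (g ∘ f) y) : ∃! x, IsFixedPt (f ∘ g) x := by
  obtain ⟨y, hy, y_unique⟩ := h
  refine ⟨f y, mapsTo_fixedPoints_comp f g hy, fun x hx => ?_⟩
  have hgx : g x = y := y_unique _ (mapsTo_fixedPoints_comp g f hx)
  rw [← hgx]
  exact hx.symm

theorem existsUnique_isFixedPt_of_contractingWith {X : Type*} [MetricSpace X] [CompleteSpace X]
    [Nonempty X] {K : ℝ≥0} {f : X → X} (hf : ContractingWith K f) : ∃! x, IsFixedPt f x :=
  ⟨hf.fixedPoint, hf.fixedPoint_isFixedPt, fun _ => hf.fixedPoint_unique⟩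

theorem exists_nnreal_forall_le_lt_one {ι : Type*} [Finite ι] {f : ι → ℝ} (hf : ∀ i, f i < 1) :
    ∃ K : ℝ≥0, K < 1 ∧ ∀ i, f i ≤ K := by
  cases nonempty_fintype ι
  refine ⟨univ.sup fun i => (f i).toNNReal, ?_, fun i => ?_⟩
  · simpa [Finset.sup_lt_iff] using hf
  · exact Real.toNNReal_le_iff_le_coe.1 (le_sup (f := fun i => (f i).toNNReal) (mem_univ i))

section Fmax

variable {A : Type*} [Fintype A] [Nonempty A]

theorem fmax_add_const (f : A → ℝ) (c : ℝ) : fmax (fun a => f a + c) = fmax f + c :=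
  (sup'_add univ f c univ_nonempty).symm

theorem lipschitzWith_fmax : LipschitzWith 1 (fmax : (A → ℝ) → ℝ) := by
  refine LipschitzWith.of_le_add fun f g => sup'_le _ _ fun a _ => ?_
  have hfg : f a - g a ≤ dist f g := (Real.sub_le_dist _ _).trans (dist_le_pi_dist f g a)
  have hg : g a ≤ fmax g := le_sup' g (mem_univ a)
  linarith

/-- The state values `max_a Q(i,a)` of a table `Q` of state-action values, through which the SOR
operator depends on its argument. -/
noncomputable def greedyValue {S : Type*} (Q : S → A → ℝ) : S → ℝ :=
  fun i => fmax (Q i)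

end Fmax

section Bellman

variable {S A : Type*} [Fintype S]

/-- The state-action values `r(i,a) + α ∑ j, p(j|i,a) V(j)` of one-step lookahead from the state
values `V`. -/
def lookahead (p : S → A → S → ℝ) (r : S → A → ℝ) (α : ℝ) (V : S → ℝ) : S → A → ℝ :=
  fun i a => r i a + α * ∑ j, p i a j * V j

/-- The relaxation of one-step lookahead towards the current state values: the SOR operator `H_w`
as a function of the greedy state values of its argument. -/
def relaxedLookahead (p : S → A → S → ℝ) (r : S → A → ℝ) (α w : ℝ) (V : S → ℝ) : S → A → ℝ :=
  fun i a => w * lookahead p r α V i a + (1 - w) * V i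

/-- The Bellman operator on state values, written with a scale `w ≠ 0`: by positive homogeneity of
the maximum it is the usual `max_a` operator for every `w > 0`, and the `min_a` operator for every
`w < 0`. -/
noncomputable def scaledBellman [Fintype A] [Nonempty A] (p : S → A → S → ℝ) (r : S → A → ℝ)
    (α w : ℝ) (V : S → ℝ) : S → ℝ :=
  fun i => w⁻¹ * fmax (fun a => w * lookahead p r α V i a)

variable {p : S → A → S → ℝ} {α : ℝ} {K : ℝ≥0}

theorem dist_lookahead_le (hK : ∀ i a, ∑ j, |α * p i a j| ≤ K) (r : S → A → ℝ) (V V' : S → ℝ)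
    (i : S) (a : A) :
    dist (lookahead p r α V i a) (lookahead p r α V' i a) ≤ K * dist V V' := by
  calc dist (lookahead p r α V i a) (lookahead p r α V' i a)
      = |∑ j, α * p i a j * (V j - V' j)| := by
        simp only [lookahead, Real.dist_eq, add_sub_add_left_eq_sub, mul_sum, ← sum_sub_distrib,
          mul_sub, mul_assoc]
    _ ≤ ∑ j, |α * p i a j| * |V j - V' j| := by
        simpa only [abs_mul] using abs_sum_le_sum_abs (fun j => α * p i a j * (V j - V' j)) univ
    _ ≤ ∑ j, |α * p i a j| * dist V V' := by
        gcongr with j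
        exact dist_le_pi_dist V V' j
    _ = (∑ j, |α * p i a j|) * dist V V' := (sum_mul ..).symm
    _ ≤ K * dist V V' := by gcongr; exact hK i a

variable [Fintype A] [Nonempty A]

theorem lipschitzWith_scaledBellman (hK : ∀ i a, ∑ j, |α * p i a j| ≤ K) (r : S → A → ℝ) {w : ℝ}
    (hw : w ≠ 0) : LipschitzWith K (scaledBellman p r α w) := by
  refine LipschitzWith.of_dist_le_mul fun V V' => (dist_pi_le_iff (by positivity)).2 fun i => ?_
  have fmax_dist_le : dist (fmax fun a => w * lookahead p r α V i a)
      (fmax fun a => w * lookahead p r α V' i a) ≤ |w| * (K * dist V V') := by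
    refine (lipschitzWith_fmax.dist_le_mul _ _).trans ?_
    rw [NNReal.coe_one, one_mul, dist_pi_le_iff (by positivity)]
    intro a
    rw [Real.dist_eq, ← mul_sub, abs_mul]
    gcongr
    exact dist_lookahead_le hK r V V' i a
  calc dist (scaledBellman p r α w V i) (scaledBellman p r α w V' i)
      = |w|⁻¹ * dist (fmax fun a => w * lookahead p r α V i a)
          (fmax fun a => w * lookahead p r α V' i a) := by
        simp only [scaledBellman, Real.dist_eq, ← mul_sub, abs_mul, abs_inv]
    _ ≤ |w|⁻¹ * (|w| * (K * dist V V')) := by gcongr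
    _ = K * dist V V' := inv_mul_cancel_left₀ (abs_ne_zero.2 hw) _

theorem isFixedPt_greedyValue_comp_relaxedLookahead_iff (p : S → A → S → ℝ) (r : S → A → ℝ)
    (α : ℝ) {w : ℝ} (hw : w ≠ 0) (V : S → ℝ) :
    IsFixedPt (greedyValue ∘ relaxedLookahead p r α w) V ↔
      IsFixedPt (scaledBellman p r α w) V := by
  have fmax_relaxedLookahead (i : S) : fmax (relaxedLookahead p r α w V i) =
      fmax (fun a => w * lookahead p r α V i a) + (1 - w) * V i := fmax_add_const _ _
  simp only [IsFixedPt, funext_iff, comp_apply, greedyValue, scaledBellman, fmax_relaxedLookahead,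
    inv_mul_eq_iff_eq_mul₀ hw]
  refine forall_congr' fun i => ?_
  constructor <;> intro h <;> linarith

theorem Hw_eq_relaxedLookahead_comp_greedyValue [Nonempty S] (p : S → A → S → ℝ)
    (r : S → A → ℝ) (α w : ℝ) : Hw p r α w = relaxedLookahead p r α w ∘ greedyValue :=
  rfl

end Bellman

theorem Hw_exists_unique_fixed_point_general {S A : Type*} [Fintype S] [Fintype A]
    [Nonempty S] [Nonempty A] (p : S → A → S → ℝ) (r : S → A → ℝ) (α : ℝ)
    (hαp : ∀ i a, ∑ j, |α * p i a j| < 1) {w : ℝ} (hw : w ≠ 0) :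
    ∃! Qstar : S → A → ℝ, Hw p r α w Qstar = Qstar := by
  obtain ⟨K, hK1, hK⟩ := exists_nnreal_forall_le_lt_one fun ia : S × A => hαp ia.1 ia.2
  have bellman_unique : ∃! V, IsFixedPt (scaledBellman p r α w) V :=
    existsUnique_isFixedPt_of_contractingWith
      ⟨hK1, lipschitzWith_scaledBellman (fun i a => hK (i, a)) r hw⟩
  rw [Hw_eq_relaxedLookahead_comp_greedyValue]
  refine existsUnique_isFixedPt_comp_comm ?_
  simpa only [isFixedPt_greedyValue_comp_relaxedLookahead_iff p r α hw] using bellman_unique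

/-- For `0 < w ≤ w*`, the operator `H_w` has exactly one fixed point. -/
theorem Hw_exists_unique_fixed_point {S A : Type*} [Fintype S] [Fintype A]
    [Nonempty S] [Nonempty A]
    (p : S → A → S → ℝ) (r : S → A → ℝ) (α : ℝ)
    (hp : ∀ i a j, 0 ≤ p i a j) (hsum : ∀ i a, ∑ j, p i a j = 1)
    (hα0 : 0 ≤ α) (hα1 : α < 1)
    (w : ℝ) (hw0 : 0 < w) (hw : w ≤ wstar p α) :
    ∃! Qstar : S → A → ℝ, Hw p r α w Qstar = Qstar := by
  refine Hw_exists_unique_fixed_point_general p r α (fun i a => ?_) hw0.ne'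
  simpa only [abs_mul, abs_of_nonneg hα0, abs_of_nonneg (hp i a _), ← mul_sum, hsum, mul_one]
end

section
/- Let w > 0, let V : S → ℝ satisfy the Bellman equation V(i) = max_{a∈A} (r(i,a) + α ∑_{j∈S} p(j|i,a)·V(j)) for all i ∈ S, and define Q*(i,a) := w·(r(i,a) + α ∑_{j∈S} p(j|i,a)·V(j)) + (1−w)·V(i). Then Q* is a fixed point of H_w, i.e., H_w Q* = Q*. -/
open Finset

lemma fmax_const_mul_add_const {A : Type*} [Fintype A] [Nonempty A] {w : ℝ} (hw : 0 ≤ w)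
    (f : A → ℝ) (c : ℝ) : fmax (fun a => w * f a + c) = w * fmax f + c := by
  simp only [fmax, mul₀_sup' hw, sup'_add]

lemma fmax_eq_of_relaxation {A : Type*} [Fintype A] [Nonempty A] {w v : ℝ} (hw : 0 ≤ w)
    {f q : A → ℝ} (hv : v = fmax f) (hq : ∀ a, q a = w * f a + (1 - w) * v) : fmax q = v :=
  calc fmax q = w * fmax f + (1 - w) * v := by rw [funext hq, fmax_const_mul_add_const hw]
    _ = w * v + (1 - w) * v := by rw [← hv]
    _ = v := by ring

theorem Qstar_fixed_point_general {S A : Type*} [Fintype S] [Fintype A] [Nonempty S] [Nonempty A]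
    (p : S → A → S → ℝ) (r : S → A → ℝ) (α : ℝ) {w : ℝ} (hw : 0 ≤ w) (V : S → ℝ)
    (hV : ∀ i, V i = fmax (fun a => r i a + α * ∑ j, p i a j * V j))
    (Qstar : S → A → ℝ)
    (hQ : ∀ i a, Qstar i a = w * (r i a + α * ∑ j, p i a j * V j) + (1 - w) * V i) :
    Hw p r α w Qstar = Qstar := by
  have fmax_Qstar (i : S) : fmax (Qstar i) = V i := fmax_eq_of_relaxation hw (hV i) (hQ i)
  funext i a
  simp only [Hw, fmax_Qstar, hQ]

/-- If `V` satisfies the Bellman equation and `Q*` is defined by the SOR construction,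
then `Q*` is a fixed point of `H_w`. -/
theorem Qstar_fixed_point {S A : Type*} [Fintype S] [Fintype A] [Nonempty S] [Nonempty A]
    (p : S → A → S → ℝ) (r : S → A → ℝ) (α : ℝ)
    (hp : ∀ i a j, 0 ≤ p i a j) (hsum : ∀ i a, ∑ j, p i a j = 1)
    (hα0 : 0 ≤ α) (hα1 : α < 1)
    (w : ℝ) (hw0 : 0 < w)
    (V : S → ℝ)
    (hV : ∀ i, V i = fmax (fun a => r i a + α * ∑ j, p i a j * V j))
    (Qstar : S → A → ℝ)
    (hQ : ∀ i a, Qstar i a = w * (r i a + α * ∑ j, p i a j * V j) + (1 - w) * V i) :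
    Hw p r α w Qstar = Qstar :=
  Qstar_fixed_point_general p r α hw0.le V hV Qstar hQ
end

section
/- Let 0 < w ≤ w*, let Q : S×A → ℝ be a fixed point of the Q-Bellman operator H (H Q = Q), and let Q' : S×A → ℝ be a fixed point of H_w (H_w Q' = Q'). Then for every state i ∈ S and every action c ∈ A with Q(i,c) = max_{b∈A} Q(i,b), one has Q'(i,c) = Q(i,c). -/
open Finset

/-- The standard Q-Bellman operator `H`. -/
noncomputable def Hop {S A : Type*} [Fintype S] [Fintype A] [Nonempty S] [Nonempty A]
    (p : S → A → S → ℝ) (r : S → A → ℝ) (α : ℝ) (Q : S → A → ℝ) : S → A → ℝ :=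
  fun i a => r i a + α * ∑ j, p i a j * fmax (Q j)

/-!
The value function `V i = max_a Q(i, a)` of a fixed point `Q` of `H` solves the Bellman equation
`V i = max_a (r(i, a) + α ∑ j, p(j|i, a) V j)`. So does that of a fixed point of `H_w`: take the
maximum over the actions in `H_w Q' = Q'`, cancel `V i` and divide by `w > 0`.
The Bellman operator strictly shrinks the largest difference of two distinct value functions, so
the two value functions agree. Since `H_w` sees its argument only through the value function,
`Q' = H_w Q' = H_w Q`, and this is `w Q(i, c) + (1 - w) V i = Q(i, c)` at a maximizing action `c`.
-/

lemma sum_abs_mul_eq {ι : Type*} [Fintype ι] {q : ι → ℝ} {α : ℝ} (hq : ∀ j, 0 ≤ q j)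
    (hsum : ∑ j, q j = 1) (hα : 0 ≤ α) : ∑ j, |α * q j| = α := by
  simp only [abs_of_nonneg (mul_nonneg hα (hq _)), ← Finset.mul_sum, hsum, mul_one]

section Fmax

variable {A : Type*} [Fintype A] [Nonempty A]

lemma le_fmax_s9 (f : A → ℝ) (a : A) : f a ≤ fmax f :=
  Finset.le_sup' f (Finset.mem_univ a)

lemma exists_fmax_eq (f : A → ℝ) : ∃ a, fmax f = f a := by
  obtain ⟨a, -, ha⟩ := Finset.exists_mem_eq_sup' Finset.univ_nonempty f
  exact ⟨a, ha⟩

lemma fmax_mul_add {w : ℝ} (hw : 0 ≤ w) (f : A → ℝ) (b : ℝ) :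
    fmax (fun a => w * f a + b) = w * fmax f + b := by
  have affine_mono : Monotone fun x : ℝ => w * x + b :=
    (monotone_id.const_mul hw).add_const b
  exact (Finset.apply_sup'_eq_sup'_comp Finset.univ_nonempty (fun x : ℝ => w * x + b)
    affine_mono.map_sup).symm

lemma exists_abs_fmax_sub_fmax_le (f g : A → ℝ) : ∃ a, |fmax f - fmax g| ≤ |f a - g a| := by
  wlog hgf : fmax g ≤ fmax f generalizing f g
  · simpa only [abs_sub_comm] using this g f (le_of_not_ge hgf)
  obtain ⟨a, ha⟩ := exists_fmax_eq f
  refine ⟨a, ?_⟩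
  calc |fmax f - fmax g| = f a - fmax g := by rw [abs_of_nonneg (sub_nonneg.2 hgf), ha]
    _ ≤ f a - g a := sub_le_sub_left (le_fmax_s9 g a) _
    _ ≤ |f a - g a| := le_abs_self _

end Fmax

section BellmanOp

variable {S A : Type*} [Fintype S] [Fintype A] [Nonempty A] {p : S → A → S → ℝ} {r : S → A → ℝ}
  {α : ℝ}

/-- The Bellman optimality operator on value functions. It is defined for an arbitrary real kernel
`p`, not only for transition probabilities. -/
noncomputable def bellmanOp (p : S → A → S → ℝ) (r : S → A → ℝ) (α : ℝ) (V : S → ℝ) : S → ℝ :=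
  fun i => fmax fun a => r i a + α * ∑ j, p i a j * V j

lemma exists_abs_bellmanOp_sub_le (U V : S → ℝ) (i : S) :
    ∃ a, |bellmanOp p r α U i - bellmanOp p r α V i| ≤ ∑ j, |α * p i a j| * |U j - V j| := by
  obtain ⟨a, ha⟩ := exists_abs_fmax_sub_fmax_le
    (fun a => r i a + α * ∑ j, p i a j * U j) (fun a => r i a + α * ∑ j, p i a j * V j)
  refine ⟨a, ha.trans ?_⟩
  calc |r i a + α * ∑ j, p i a j * U j - (r i a + α * ∑ j, p i a j * V j)|
      = |∑ j, α * p i a j * (U j - V j)| := by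
        simp only [mul_sub, Finset.sum_sub_distrib, Finset.mul_sum, mul_assoc,
          add_sub_add_left_eq_sub]
    _ ≤ ∑ j, |α * p i a j * (U j - V j)| := Finset.abs_sum_le_sum_abs _ _
    _ = ∑ j, |α * p i a j| * |U j - V j| := by simp only [abs_mul]

lemma bellmanOp_fixedPt_unique (hp : ∀ i a, ∑ j, |α * p i a j| < 1) {U V : S → ℝ}
    (hU : Function.IsFixedPt (bellmanOp p r α) U) (hV : Function.IsFixedPt (bellmanOp p r α) V) :
    U = V := by
  by_contra hUV
  obtain ⟨k, hk⟩ := Function.ne_iff.1 hUV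
  have : Nonempty S := ⟨k⟩
  obtain ⟨m, hm⟩ := Finite.exists_max fun i => |U i - V i|
  have dist_pos : 0 < |U m - V m| := (abs_pos.2 (sub_ne_zero.2 hk)).trans_le (hm k)
  obtain ⟨a, ha⟩ := exists_abs_bellmanOp_sub_le (p := p) (r := r) (α := α) U V m
  refine lt_irrefl |U m - V m| ?_
  calc |U m - V m| ≤ ∑ j, |α * p m a j| * |U j - V j| := by rwa [hU.eq, hV.eq] at ha
    _ ≤ ∑ j, |α * p m a j| * |U m - V m| :=
        Finset.sum_le_sum fun j _ => mul_le_mul_of_nonneg_left (hm j) (abs_nonneg _)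
    _ = (∑ j, |α * p m a j|) * |U m - V m| := (Finset.sum_mul ..).symm
    _ < |U m - V m| := mul_lt_of_lt_one_left dist_pos (hp m a)

end BellmanOp

section QBellman

variable {S A : Type*} [Fintype S] [Fintype A] [Nonempty S] [Nonempty A] {p : S → A → S → ℝ}
  {r : S → A → ℝ} {α w : ℝ} {Q Q' : S → A → ℝ}

lemma Hw_apply_eq_Hop (i : S) (a : A) :
    Hw p r α w Q i a = w * Hop p r α Q i a + (1 - w) * fmax (Q i) :=
  rfl

lemma Hw_congr_fmax (h : (fun i => fmax (Q i)) = fun i => fmax (Q' i)) :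
    Hw p r α w Q = Hw p r α w Q' := by
  have fmax_eq (i : S) : fmax (Q i) = fmax (Q' i) := congrFun h i
  funext i a
  simp only [Hw, fmax_eq]

lemma fmax_Hop (i : S) : fmax (Hop p r α Q i) = bellmanOp p r α (fun j => fmax (Q j)) i :=
  rfl

lemma fmax_Hw (hw : 0 ≤ w) (i : S) :
    fmax (Hw p r α w Q i) =
      w * bellmanOp p r α (fun j => fmax (Q j)) i + (1 - w) * fmax (Q i) := by
  rw [← fmax_Hop]
  exact fmax_mul_add hw _ _

lemma isFixedPt_bellmanOp_of_Hop_eq (hQ : Hop p r α Q = Q) :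
    Function.IsFixedPt (bellmanOp p r α) fun i => fmax (Q i) := by
  funext i
  rw [← fmax_Hop, hQ]

lemma isFixedPt_bellmanOp_of_Hw_eq (hw : 0 < w) (hQ : Hw p r α w Q = Q) :
    Function.IsFixedPt (bellmanOp p r α) fun i => fmax (Q i) := by
  funext i
  have max_eq := fmax_Hw (p := p) (r := r) (α := α) (Q := Q) hw.le i
  rw [hQ] at max_eq
  refine mul_left_cancel₀ hw.ne' ?_
  linarith

lemma Hw_apply_eq_of_Hop_eq (hQ : Hop p r α Q = Q) {i : S} {c : A} (hc : Q i c = fmax (Q i)) :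
    Hw p r α w Q i c = Q i c := by
  rw [Hw_apply_eq_Hop, hQ, ← hc]
  ring

theorem sor_Q_eq_Q_at_optimal_action_general (hp : ∀ i a, ∑ j, |α * p i a j| < 1) (hw : 0 < w)
    (hQ : Hop p r α Q = Q) (hQ' : Hw p r α w Q' = Q') {i : S} {c : A} (hc : Q i c = fmax (Q i)) :
    Q' i c = Q i c := by
  have value_eq : (fun i => fmax (Q' i)) = fun i => fmax (Q i) :=
    bellmanOp_fixedPt_unique hp (isFixedPt_bellmanOp_of_Hw_eq hw hQ')
      (isFixedPt_bellmanOp_of_Hop_eq hQ)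
  calc Q' i c = Hw p r α w Q' i c := by rw [hQ']
    _ = Hw p r α w Q i c := by rw [Hw_congr_fmax value_eq]
    _ = Q i c := Hw_apply_eq_of_Hop_eq hQ hc

end QBellman

/-- If `Q` is a fixed point of `H` and `Q'` a fixed point of `H_w`, then `Q'` agrees with `Q`
at every maximizing (optimal) action. -/
theorem sor_Q_eq_Q_at_optimal_action {S A : Type*} [Fintype S] [Fintype A]
    [Nonempty S] [Nonempty A]
    (p : S → A → S → ℝ) (r : S → A → ℝ) (α : ℝ)
    (hp : ∀ i a j, 0 ≤ p i a j) (hsum : ∀ i a, ∑ j, p i a j = 1)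
    (hα0 : 0 ≤ α) (hα1 : α < 1)
    (w : ℝ) (hw0 : 0 < w) (hw : w ≤ wstar p α)
    (Q : S → A → ℝ) (hQ : Hop p r α Q = Q)
    (Q' : S → A → ℝ) (hQ' : Hw p r α w Q' = Q') :
    ∀ i c, Q i c = fmax (Q i) → Q' i c = Q i c :=
  fun _ _ hc => sor_Q_eq_Q_at_optimal_action_general
    (fun i a => (sum_abs_mul_eq (hp i a) (hsum i a) hα0).trans_lt hα1) hw0 hQ hQ' hc
end

section
/- Suppose |r̄(i,a,j)| ≤ B for all (i,a,j), and let Q' : S×A → ℝ be any function. Set C := max{3·w²·B² + 6·(α²·w² + (1−w)²)·‖Q'‖², 6·(α²·w² + (1−w)²)}. Then for every w ∈ ℝ, every Q : S×A → ℝ and every (i,a) ∈ S×A, ∑_{j∈S} p(j|i,a)·(w·(r̄(i,a,j) + α·max_{b∈A} Q(j,b)) + (1−w)·max_{c∈A} Q(i,c) − (H_w Q)(i,a))² ≤ C·(1 + ‖Q − Q'‖²). -/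
open Finset

/-!
By the choice of `r`, `Hw p r α w Q i a` is the mean of the sampled target under `p i a`, so the
noise has second moment at most that of the target itself. The target is a sum of three terms, of
sizes `|w| B`, `|α w| ‖Q‖` and `|1 - w| ‖Q‖`; this gives the factor `3`, and splitting
`‖Q‖ ≤ ‖Q'‖ + ‖Q - Q'‖` inside the square doubles it to `6`.
-/

section WeightedSums

variable {ι R : Type*} [CommRing R] {s : Finset ι} {p x : ι → R}

theorem sum_mul_sub_mean_sq (hsum : ∑ j ∈ s, p j = 1) :
    ∑ j ∈ s, p j * (x j - ∑ k ∈ s, p k * x k) ^ 2 =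
      ∑ j ∈ s, p j * x j ^ 2 - (∑ j ∈ s, p j * x j) ^ 2 := by
  set m := ∑ k ∈ s, p k * x k with hm
  calc ∑ j ∈ s, p j * (x j - m) ^ 2
      = ∑ j ∈ s, (p j * x j ^ 2 - 2 * m * (p j * x j) + m ^ 2 * p j) :=
        sum_congr rfl fun j _ => by ring
    _ = ∑ j ∈ s, p j * x j ^ 2 - 2 * m * m + m ^ 2 * 1 := by
        rw [sum_add_distrib, sum_sub_distrib, ← mul_sum, ← mul_sum, hsum, ← hm]
    _ = ∑ j ∈ s, p j * x j ^ 2 - m ^ 2 := by ring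

variable [LinearOrder R] [IsOrderedRing R]

theorem sum_mul_sub_mean_sq_le (hsum : ∑ j ∈ s, p j = 1) :
    ∑ j ∈ s, p j * (x j - ∑ k ∈ s, p k * x k) ^ 2 ≤ ∑ j ∈ s, p j * x j ^ 2 := by
  rw [sum_mul_sub_mean_sq hsum]
  exact sub_le_self _ (sq_nonneg _)

end WeightedSums

theorem sum_mul_le_of_forall_le {ι R : Type*} [Semiring R] [PartialOrder R] [IsOrderedRing R]
    {s : Finset ι} {p x : ι → R} {M : R} (hp : ∀ j ∈ s, 0 ≤ p j) (hsum : ∑ j ∈ s, p j = 1)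
    (hx : ∀ j ∈ s, x j ≤ M) : ∑ j ∈ s, p j * x j ≤ M :=
  calc ∑ j ∈ s, p j * x j
      ≤ ∑ j ∈ s, p j * M := sum_le_sum fun j hj => mul_le_mul_of_nonneg_left (hx j hj) (hp j hj)
    _ = M := by rw [← sum_mul, hsum, one_mul]

theorem add_add_sq_le {R : Type*} [CommRing R] [LinearOrder R] [IsStrictOrderedRing R]
    (a b c : R) : (a + b + c) ^ 2 ≤ 3 * (a ^ 2 + b ^ 2 + c ^ 2) := by
  linarith [sq_nonneg (a - b), sq_nonneg (b - c), sq_nonneg (a - c)]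

theorem add_mul_le_max_mul_one_add {R : Type*} [Semiring R] [LinearOrder R] [IsOrderedRing R]
    (a b : R) {t : R} (ht : 0 ≤ t) : a + b * t ≤ max a b * (1 + t) := by
  rw [mul_one_add]
  gcongr
  exacts [le_max_left a b, le_max_right a b]

theorem norm_sq_le_two_mul_norm_sq_add_norm_sub_sq {E : Type*} [SeminormedAddCommGroup E]
    (x y : E) : ‖x‖ ^ 2 ≤ 2 * (‖y‖ ^ 2 + ‖x - y‖ ^ 2) :=
  calc ‖x‖ ^ 2 ≤ (‖y‖ + ‖x - y‖) ^ 2 := by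
        gcongr
        exact norm_le_norm_add_norm_sub' x y
    _ ≤ 2 * (‖y‖ ^ 2 + ‖x - y‖ ^ 2) := add_sq_le

theorem abs_fmax_le_norm {A : Type*} [Fintype A] [Nonempty A] (f : A → ℝ) : |fmax f| ≤ ‖f‖ := by
  obtain ⟨a, -, ha⟩ := exists_mem_eq_sup' (univ_nonempty (α := A)) f
  rw [fmax, ha]
  exact norm_le_pi_norm f a

theorem supNorm_eq_norm {I : Type*} [Fintype I] [Nonempty I] (f : I → ℝ) : supNorm f = ‖f‖ :=
  le_antisymm (sup'_le univ_nonempty _ fun i _ => norm_le_pi_norm f i)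
    ((pi_norm_le_iff_of_nonempty f).2 fun i => le_sup' (fun i => |f i|) (mem_univ i))

theorem norm_uncurry {S A E : Type*} [Fintype S] [Fintype A] [SeminormedAddCommGroup E]
    (Q : S → A → E) :
    ‖fun ia : S × A => Q ia.1 ia.2‖ = ‖Q‖ := by
  refine le_antisymm ?_ ?_
  · refine (pi_norm_le_iff_of_nonneg (norm_nonneg Q)).2 fun ia => ?_
    exact (norm_le_pi_norm (Q ia.1) ia.2).trans (norm_le_pi_norm Q ia.1)
  · refine (pi_norm_le_iff_of_nonneg (norm_nonneg _)).2 fun i => ?_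
    refine (pi_norm_le_iff_of_nonneg (norm_nonneg _)).2 fun a => ?_
    exact norm_le_pi_norm (fun ia : S × A => Q ia.1 ia.2) (i, a)

theorem fmax_apply_sq_le_norm_sq {S A : Type*} [Fintype S] [Fintype A] [Nonempty A]
    (Q : S → A → ℝ) (j : S) : fmax (Q j) ^ 2 ≤ ‖Q‖ ^ 2 :=
  sq_le_sq.2 <| calc
    |fmax (Q j)| ≤ ‖Q j‖ := abs_fmax_le_norm (Q j)
    _ ≤ ‖Q‖ := norm_le_pi_norm Q j
    _ = |‖Q‖| := (abs_norm Q).symm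

/-- The target of one SOR Q-learning update of `Q` at `(i, a)` when the sampled next state is `j`:
the random quantity of which `Hw` is the conditional expectation. -/
noncomputable def sorTarget {S A : Type*} [Fintype A] [Nonempty A]
    (rb : S → A → S → ℝ) (α w : ℝ) (Q : S → A → ℝ) (i : S) (a : A) (j : S) : ℝ :=
  w * (rb i a j + α * fmax (Q j)) + (1 - w) * fmax (Q i)

section SORNoise

variable {S A : Type*} [Fintype S] [Fintype A] [Nonempty A]
  {p rb : S → A → S → ℝ} {B : ℝ} {i : S} {a : A}

theorem sum_mul_sorTarget_eq_Hw [Nonempty S] (hsum : ∑ j, p i a j = 1) (α w : ℝ)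
    (Q : S → A → ℝ) :
    ∑ j, p i a j * sorTarget rb α w Q i a j =
      Hw p (fun i a => ∑ j, p i a j * rb i a j) α w Q i a :=
  calc ∑ j, p i a j * sorTarget rb α w Q i a j
      = ∑ j, (w * (p i a j * rb i a j + α * (p i a j * fmax (Q j))) +
          p i a j * ((1 - w) * fmax (Q i))) :=
        sum_congr rfl fun j _ => by rw [sorTarget]; ring
    _ = Hw p (fun i a => ∑ j, p i a j * rb i a j) α w Q i a := by
        rw [sum_add_distrib, ← mul_sum, sum_add_distrib, ← mul_sum, ← sum_mul, hsum, one_mul, Hw]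

theorem sorTarget_sq_le {j : S} (hr : |rb i a j| ≤ B) (α w : ℝ) (Q : S → A → ℝ) :
    sorTarget rb α w Q i a j ^ 2 ≤
      3 * w ^ 2 * B ^ 2 + 3 * (α ^ 2 * w ^ 2 + (1 - w) ^ 2) * ‖Q‖ ^ 2 := by
  have reward_sq_le : rb i a j ^ 2 ≤ B ^ 2 := sq_le_sq.2 (hr.trans (le_abs_self B))
  have next_fmax_sq_le : fmax (Q j) ^ 2 ≤ ‖Q‖ ^ 2 := fmax_apply_sq_le_norm_sq Q j
  have current_fmax_sq_le : fmax (Q i) ^ 2 ≤ ‖Q‖ ^ 2 := fmax_apply_sq_le_norm_sq Q i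
  calc sorTarget rb α w Q i a j ^ 2
      = (w * rb i a j + α * w * fmax (Q j) + (1 - w) * fmax (Q i)) ^ 2 := by
        rw [sorTarget]; ring
    _ ≤ 3 * ((w * rb i a j) ^ 2 + (α * w * fmax (Q j)) ^ 2 + ((1 - w) * fmax (Q i)) ^ 2) :=
        add_add_sq_le _ _ _
    _ = 3 * (w ^ 2 * rb i a j ^ 2 + α ^ 2 * w ^ 2 * fmax (Q j) ^ 2 +
          (1 - w) ^ 2 * fmax (Q i) ^ 2) := by ring
    _ ≤ 3 * (w ^ 2 * B ^ 2 + α ^ 2 * w ^ 2 * ‖Q‖ ^ 2 + (1 - w) ^ 2 * ‖Q‖ ^ 2) := by gcongr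
    _ = 3 * w ^ 2 * B ^ 2 + 3 * (α ^ 2 * w ^ 2 + (1 - w) ^ 2) * ‖Q‖ ^ 2 := by ring

theorem sum_mul_sorTarget_sub_Hw_sq_le [Nonempty S] (hp : ∀ j, 0 ≤ p i a j)
    (hsum : ∑ j, p i a j = 1) (hr : ∀ j, |rb i a j| ≤ B) (α w : ℝ) (Q : S → A → ℝ) :
    ∑ j, p i a j *
        (sorTarget rb α w Q i a j - Hw p (fun i a => ∑ j, p i a j * rb i a j) α w Q i a) ^ 2 ≤
      3 * w ^ 2 * B ^ 2 + 3 * (α ^ 2 * w ^ 2 + (1 - w) ^ 2) * ‖Q‖ ^ 2 := by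
  rw [← sum_mul_sorTarget_eq_Hw hsum]
  exact (sum_mul_sub_mean_sq_le hsum).trans <|
    sum_mul_le_of_forall_le (fun j _ => hp j) hsum fun j _ => sorTarget_sq_le (hr j) α w Q

theorem noise_second_moment_bound_C_general [Nonempty S] (hp : ∀ j, 0 ≤ p i a j)
    (hsum : ∑ j, p i a j = 1) (hr : ∀ j, |rb i a j| ≤ B) (α w : ℝ) (Q' Q : S → A → ℝ) :
    ∑ j, p i a j *
        (w * (rb i a j + α * fmax (Q j)) + (1 - w) * fmax (Q i) -
          Hw p (fun i a => ∑ j, p i a j * rb i a j) α w Q i a) ^ 2 ≤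
      max (3 * w ^ 2 * B ^ 2 +
            6 * (α ^ 2 * w ^ 2 + (1 - w) ^ 2) *
              (supNorm (fun ia : S × A => Q' ia.1 ia.2)) ^ 2)
          (6 * (α ^ 2 * w ^ 2 + (1 - w) ^ 2)) *
        (1 + (supNorm (fun ia : S × A => Q ia.1 ia.2 - Q' ia.1 ia.2)) ^ 2) := by
  have supNorm_sub : supNorm (fun ia : S × A => Q ia.1 ia.2 - Q' ia.1 ia.2) = ‖Q - Q'‖ :=
    (supNorm_eq_norm _).trans (norm_uncurry (Q - Q'))
  rw [supNorm_sub, supNorm_eq_norm, norm_uncurry]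
  set K := α ^ 2 * w ^ 2 + (1 - w) ^ 2
  calc _ ≤ 3 * w ^ 2 * B ^ 2 + 3 * K * ‖Q‖ ^ 2 :=
        sum_mul_sorTarget_sub_Hw_sq_le hp hsum hr α w Q
    _ ≤ 3 * w ^ 2 * B ^ 2 + 3 * K * (2 * (‖Q'‖ ^ 2 + ‖Q - Q'‖ ^ 2)) := by
        gcongr
        exact norm_sq_le_two_mul_norm_sq_add_norm_sub_sq Q Q'
    _ = 3 * w ^ 2 * B ^ 2 + 6 * K * ‖Q'‖ ^ 2 + 6 * K * ‖Q - Q'‖ ^ 2 := by ring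
    _ ≤ max (3 * w ^ 2 * B ^ 2 + 6 * K * ‖Q'‖ ^ 2) (6 * K) * (1 + ‖Q - Q'‖ ^ 2) :=
        add_mul_le_max_mul_one_add _ _ (sq_nonneg _)

end SORNoise

/-- Conditional second moment of the SOR Q-learning noise is bounded by `C (1 + ‖Q - Q'‖²)`. -/
theorem noise_second_moment_bound_C {S A : Type*} [Fintype S] [Fintype A]
    [Nonempty S] [Nonempty A]
    (p : S → A → S → ℝ) (rb : S → A → S → ℝ) (α B : ℝ)
    (hp : ∀ i a j, 0 ≤ p i a j) (hsum : ∀ i a, ∑ j, p i a j = 1)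
    (hα0 : 0 ≤ α) (hα1 : α < 1)
    (hB : 0 ≤ B) (hr : ∀ i a j, |rb i a j| ≤ B) :
    ∀ (w : ℝ) (Q' : S → A → ℝ),
      ∀ (Q : S → A → ℝ) (i : S) (a : A),
        ∑ j, p i a j *
            (w * (rb i a j + α * fmax (Q j)) + (1 - w) * fmax (Q i) -
              Hw p (fun i a => ∑ j, p i a j * rb i a j) α w Q i a) ^ 2 ≤
          max (3 * w ^ 2 * B ^ 2 +
                6 * (α ^ 2 * w ^ 2 + (1 - w) ^ 2) *
                  (supNorm (fun ia : S × A => Q' ia.1 ia.2)) ^ 2)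
              (6 * (α ^ 2 * w ^ 2 + (1 - w) ^ 2)) *
            (1 + (supNorm (fun ia : S × A => Q ia.1 ia.2 - Q' ia.1 ia.2)) ^ 2) := by
  intro w Q' Q i a
  exact noise_second_moment_bound_C_general (hp i a) (hsum i a) (hr i a) α w Q' Q
end
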